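/- arXiv:1806.11416 — 2 statements merged into one kernel-verified Lean document; each statement's English description precedes it below -/
import Mathlib

section
/- Let R ⊆ ℝⁿ be a convex set, let g be twice continuously differentiable on an open set containing R, and let ε > 0. If u, v ∈ R and there are p ∈ ℝⁿ and q ∈ ℝ such that |p·z + q − g(z)| ≤ ε for every z on the segment [u, v], then ‖v − u‖₂² · Ψ(g, u, v)² ≤ 16 ε. -/
open scoped RealInnerProductSpace

noncomputable def hess {n : ℕ} (g : EuclideanSpace ℝ (Fin n) → ℝ)
    (z : EuclideanSpace ℝ (Fin n)) : Matrix (Fin n) (Fin n) ℝ :=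
  fun i j => iteratedFDeriv ℝ 2 g z ![EuclideanSpace.single i 1, EuclideanSpace.single j 1]

noncomputable def lamMax {n : ℕ} (A : Matrix (Fin n) (Fin n) ℝ) : ℝ := sSup (spectrum ℝ A)

noncomputable def lamMin {n : ℕ} (A : Matrix (Fin n) (Fin n) ℝ) : ℝ := sInf (spectrum ℝ A)

noncomputable def Psi {n : ℕ} (g : EuclideanSpace ℝ (Fin n) → ℝ)
    (x y : EuclideanSpace ℝ (Fin n)) : ℝ :=
  Real.sqrt (sInf ((fun α : ℝ =>
      max 0 (Real.sign (lamMax (hess g ((1 - α) • x + α • y)) *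
          lamMin (hess g ((1 - α) • x + α • y))) *
        min |lamMax (hess g ((1 - α) • x + α • y))|
            |lamMin (hess g ((1 - α) • x + α • y))|)) '' Set.Icc (0 : ℝ) 1))

theorem posSemidef_quad {n : ℕ} (A : Matrix (Fin n) (Fin n) ℝ) (hA : A.PosSemidef)
    (d : Fin n → ℝ) : 0 ≤ d ⬝ᵥ (A.mulVec d) := by
  simpa using hA.dotProduct_mulVec_nonneg d

theorem lamMin_quad {n : ℕ} (A : Matrix (Fin n) (Fin n) ℝ) (hA : A.IsHermitian)
    (d : Fin n → ℝ) : lamMin A * (d ⬝ᵥ d) ≤ d ⬝ᵥ (A.mulVec d) := by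
  have h : (A - algebraMap ℝ _ (lamMin A)).PosSemidef := by
    rw [Matrix.posSemidef_iff_isHermitian_and_spectrum_nonneg]
    refine ⟨hA.sub (by simp [Matrix.algebraMap_eq_diagonal, Matrix.IsHermitian]), ?_⟩
    rw [← spectrum.sub_singleton_eq]
    rintro x ⟨y, hy, z, rfl, rfl⟩
    have := csInf_le A.finite_real_spectrum.bddBelow hy
    simpa [lamMin] using this
  have := posSemidef_quad _ h d
  rw [Matrix.sub_mulVec, dotProduct_sub, Algebra.algebraMap_eq_smul_one, Matrix.smul_mulVec] at this
  simpa using this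

theorem lamMax_quad {n : ℕ} (A : Matrix (Fin n) (Fin n) ℝ) (hA : A.IsHermitian)
    (d : Fin n → ℝ) : d ⬝ᵥ (A.mulVec d) ≤ lamMax A * (d ⬝ᵥ d) := by
  have h : (algebraMap ℝ _ (lamMax A) - A).PosSemidef := by
    rw [Matrix.posSemidef_iff_isHermitian_and_spectrum_nonneg]
    refine ⟨Matrix.IsHermitian.sub (by simp [Matrix.algebraMap_eq_diagonal, Matrix.IsHermitian]) hA, ?_⟩
    rw [← spectrum.singleton_sub_eq]
    rintro x ⟨z, rfl, y, hy, rfl⟩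
    have := le_csSup A.finite_real_spectrum.bddAbove hy
    simpa [lamMax] using this
  have := posSemidef_quad _ h d
  rw [Matrix.sub_mulVec, dotProduct_sub, Algebra.algebraMap_eq_smul_one, Matrix.smul_mulVec] at this
  simpa using this

theorem quad_bound {n : ℕ} (A : Matrix (Fin n) (Fin n) ℝ) (hA : A.IsHermitian)
    (d : Fin n → ℝ) :
    max 0 (Real.sign (lamMax A * lamMin A) * min |lamMax A| |lamMin A|) * (d ⬝ᵥ d)
      ≤ |d ⬝ᵥ (A.mulVec d)| := by
  have h1 := lamMin_quad A hA d
  have h2 := lamMax_quad A hA d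
  have h0 : 0 ≤ d ⬝ᵥ d := by
    simpa using dotProduct_star_self_nonneg d
  generalize d ⬝ᵥ (A.mulVec d) = Q at *
  generalize d ⬝ᵥ d = N at *
  generalize lamMax A = M at *
  generalize lamMin A = m at *
  rcases lt_trichotomy (M * m) 0 with h | h | h
  · rw [Real.sign_of_neg h, max_eq_left]
    · simp
    · have : 0 ≤ min |M| |m| := by positivity
      linarith
  · simp [h]
  · rw [Real.sign_of_pos h, one_mul, max_eq_right (by positivity)]
    rcases pos_and_pos_or_neg_and_neg_of_mul_pos h with ⟨hM, hm⟩ | ⟨hM, hm⟩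
    · calc _ ≤ |m| * N := mul_le_mul_of_nonneg_right (min_le_right _ _) h0
        _ ≤ Q := by rwa [abs_of_pos hm]
        _ ≤ _ := le_abs_self _
    · calc _ ≤ |M| * N := mul_le_mul_of_nonneg_right (min_le_left _ _) h0
        _ ≤ -Q := by rw [abs_of_neg hM]; linarith
        _ ≤ _ := neg_le_abs _

theorem second_diff (h h' h'' : ℝ → ℝ) (hh : ∀ t ∈ Set.Icc (0:ℝ) 1, HasDerivAt h (h' t) t)
    (hh' : ∀ t ∈ Set.Icc (0:ℝ) 1, HasDerivAt h' (h'' t) t) :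
    ∃ ξ ∈ Set.Icc (0:ℝ) 1, h 1 + h 0 - 2 * h (1/2) = h'' ξ / 4 := by
  have hk : ∀ t ∈ Set.Icc (0:ℝ) (1/2),
      HasDerivAt (fun t => h (t + 1/2) - h t) (h' (t + 1/2) - h' t) t := by
    intro t ht
    exact ((hh (t + 1/2) ⟨by linarith [ht.1], by linarith [ht.2]⟩).comp_add_const t (1/2)).sub
      (hh t ⟨by linarith [ht.1], by linarith [ht.2]⟩)
  obtain ⟨η, hη, e1⟩ := exists_hasDerivAt_eq_slope _ _ (by norm_num : (0:ℝ) < 1/2)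
    (fun t ht => (hk t ht).continuousAt.continuousWithinAt)
    (fun t ht => hk t (Set.Ioo_subset_Icc_self ht))
  have hs : ∀ t ∈ Set.Icc η (η + 1/2), t ∈ Set.Icc (0:ℝ) 1 := fun t ht =>
    ⟨by linarith [ht.1, hη.1], by linarith [ht.2, hη.2]⟩
  obtain ⟨ξ, hξ, e2⟩ := exists_hasDerivAt_eq_slope h' h'' (by linarith : η < η + 1/2)
    (fun t ht => (hh' t (hs t ht)).continuousAt.continuousWithinAt)
    (fun t ht => hh' t (hs t (Set.Ioo_subset_Icc_self ht)))
  refine ⟨ξ, hs ξ (Set.Ioo_subset_Icc_self hξ), ?_⟩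
  norm_num at e1 e2
  norm_num
  linarith

theorem hess_quad {n : ℕ} (g : EuclideanSpace ℝ (Fin n) → ℝ)
    (z d : EuclideanSpace ℝ (Fin n)) :
    d.ofLp ⬝ᵥ ((hess g z).mulVec d.ofLp) = fderiv ℝ (fderiv ℝ g) z d d := by
  have hd : d = ∑ i, d i • EuclideanSpace.single i (1:ℝ) := by
    ext j
    simp [Finset.sum_apply, Pi.single_apply]
  conv_rhs => rw [hd]
  simp only [map_sum, map_smul, dotProduct, Matrix.mulVec, hess, iteratedFDeriv_two_apply,
    _root_.sum_apply, _root_.smul_apply, smul_eq_mul, Finset.mul_sum]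
  rw [Finset.sum_comm]
  refine Finset.sum_congr rfl fun i _ => Finset.sum_congr rfl fun j _ => ?_
  simp
  ring

/-- If an affine function `z ↦ p·z + q` is uniformly within `ε` of a C² function `g`
on the segment `[u, v]`, then `‖v − u‖₂² · Ψ(g, u, v)² ≤ 16 ε`. -/
theorem sq_norm_mul_psi_sq_le {n : ℕ} (R : Set (EuclideanSpace ℝ (Fin n))) (hR : Convex ℝ R)
    (U : Set (EuclideanSpace ℝ (Fin n))) (hU : IsOpen U) (hRU : R ⊆ U)
    (g : EuclideanSpace ℝ (Fin n) → ℝ) (hg : ContDiffOn ℝ 2 g U)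
    (ε : ℝ) (hε : 0 < ε)
    (u v : EuclideanSpace ℝ (Fin n)) (hu : u ∈ R) (hv : v ∈ R)
    (p : EuclideanSpace ℝ (Fin n)) (q : ℝ)
    (happrox : ∀ α ∈ Set.Icc (0 : ℝ) 1,
      |⟪p, (1 - α) • u + α • v⟫ + q - g ((1 - α) • u + α • v)| ≤ ε) :
    ‖v - u‖ ^ 2 * Psi g u v ^ 2 ≤ 16 * ε := by
  have hseg : ∀ t ∈ Set.Icc (0:ℝ) 1, (1 - t) • u + t • v ∈ U := fun t ht =>
    hRU (hR hu hv (by linarith [ht.2]) ht.1 (by ring))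
  have hcd : ∀ t ∈ Set.Icc (0:ℝ) 1, ContDiffAt ℝ 2 g ((1 - t) • u + t • v) := fun t ht =>
    hg.contDiffAt (hU.mem_nhds (hseg t ht))
  have hline : ∀ t : ℝ, HasDerivAt (fun t : ℝ => (1 - t) • u + t • v) (v - u) t := by
    intro t
    have h1 := (((hasDerivAt_id t).const_sub 1).smul_const u).add
      ((hasDerivAt_id t).smul_const v)
    have h2 : v - u = (-1 : ℝ) • u + (1 : ℝ) • v := by module
    rw [h2]
    exact h1
  obtain ⟨ξ, hξ, e⟩ := second_diff (fun t => g ((1 - t) • u + t • v))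
    (fun t => fderiv ℝ g ((1 - t) • u + t • v) (v - u))
    (fun t => fderiv ℝ (fderiv ℝ g) ((1 - t) • u + t • v) (v - u) (v - u))
    (fun t ht => ((hcd t ht).differentiableAt (by norm_num)).hasFDerivAt.comp_hasDerivAt t
      (hline t))
    (fun t ht => by
      have h1 : DifferentiableAt ℝ (fderiv ℝ g) ((1 - t) • u + t • v) :=
        ((hcd t ht).fderiv_right (m := 1) (by norm_num)).differentiableAt (by norm_num)
      have h2 := h1.hasFDerivAt.comp_hasDerivAt t (hline t)
      simpa using h2.clm_apply (hasDerivAt_const t (v - u)))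
  have hH : (hess g ((1 - ξ) • u + ξ • v)).IsHermitian := by
    have hs := (hcd ξ hξ).isSymmSndFDerivAt (by simp)
    ext i j
    simp only [hess, Matrix.conjTranspose_apply, iteratedFDeriv_two_apply, star_trivial]
    exact hs _ _
  have hq := quad_bound _ hH (v - u).ofLp
  rw [hess_quad] at hq
  have hN : (v - u).ofLp ⬝ᵥ (v - u).ofLp = ‖v - u‖ ^ 2 := by
    rw [EuclideanSpace.real_norm_sq_eq]
    simp [dotProduct, pow_two]
  rw [hN] at hq
  have hPsi : Psi g u v ^ 2 ≤ max 0 (Real.sign (lamMax (hess g ((1 - ξ) • u + ξ • v)) *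
          lamMin (hess g ((1 - ξ) • u + ξ • v))) *
        min |lamMax (hess g ((1 - ξ) • u + ξ • v))|
            |lamMin (hess g ((1 - ξ) • u + ξ • v))|) := by
    rw [Psi, Real.sq_sqrt]
    · refine csInf_le ⟨0, ?_⟩ ⟨ξ, hξ, rfl⟩
      rintro _ ⟨t, _, rfl⟩
      exact le_max_left _ _
    · apply Real.sInf_nonneg
      rintro _ ⟨t, _, rfl⟩
      exact le_max_left _ _
  have a0 := abs_le.1 (happrox 0 (by norm_num))
  have a1 := abs_le.1 (happrox 1 (by norm_num))
  have a2 := abs_le.1 (happrox (1/2) (by norm_num))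
  simp only [inner_add_right, inner_smul_right] at a0 a1 a2
  have hfin : |fderiv ℝ (fderiv ℝ g) ((1 - ξ) • u + ξ • v) (v - u) (v - u)| ≤ 16 * ε := by
    generalize g ((1 - (0:ℝ)) • u + (0:ℝ) • v) = g0 at *
    generalize g ((1 - (1:ℝ)) • u + (1:ℝ) • v) = g1 at *
    generalize g ((1 - (1/2:ℝ)) • u + (1/2:ℝ) • v) = g2 at *
    generalize fderiv ℝ (fderiv ℝ g) ((1 - ξ) • u + ξ • v) (v - u) (v - u) = D at *
    clear hq hPsi
    rw [abs_le]
    constructor <;> linarith [a0.1, a0.2, a1.1, a1.2, a2.1, a2.2]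
  have := mul_le_mul_of_nonneg_left hPsi (sq_nonneg ‖v - u‖)
  linarith
end

section
/- Let R ⊆ ℝⁿ be a compact convex set, let g be twice continuously differentiable on an open set containing R, let ε > 0, and let f be a layered feedforward network on ℝⁿ of depth d with widths ω₁, …, ω_d whose activation σ is piecewise linear with t pieces, such that f is an ε-approximation of g on R. Then t^{|H|} ≥ sup_{(x,y) ∈ R×R} (‖x − y‖₂ / (4√ε)) · Ψ(g, x, y), where |H| = ω₁ + … + ω_d is the number of hidden units of f. -/
/-- `σ : ℝ → ℝ` is piecewise linear with `t` pieces: `ℝ` is the union of `t` pairwise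
disjoint nonempty intervals on each of which `σ` coincides with an affine function. -/
def PiecewiseLinear (σ : ℝ → ℝ) (t : ℕ) : Prop :=
  ∃ I : Fin t → Set ℝ,
    (∀ i, (I i).Nonempty) ∧ (∀ i, Convex ℝ (I i)) ∧
    (Pairwise fun i j => Disjoint (I i) (I j)) ∧
    (⋃ i, I i) = Set.univ ∧
    ∀ i, ∃ a b : ℝ, ∀ z ∈ I i, σ z = a * z + b

/-- A layered feedforward network on `ℝⁿ`, allowing connections from all earlier layers
and from the input.  Layers are indexed by `0, …, depth - 1`. -/
structure LayeredNet (n : ℕ) where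
  depth : ℕ
  width : ℕ → ℕ
  Win : (i : ℕ) → Fin (width i) → Fin n → ℝ
  W : (i j : ℕ) → Fin (width i) → Fin (width j) → ℝ
  b : (i : ℕ) → Fin (width i) → ℝ
  cin : Fin n → ℝ
  c : (i : ℕ) → Fin (width i) → ℝ
  c0 : ℝ

/-- The output of the hidden units in layer `i`. -/
noncomputable def LayeredNet.layer {n : ℕ} (N : LayeredNet n) (σ : ℝ → ℝ)
    (x : EuclideanSpace ℝ (Fin n)) : (i : ℕ) → Fin (N.width i) → ℝ
  | i => fun k => σ ((∑ m, N.Win i k m * x m) +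
      (∑ j : Fin i, ∑ m, N.W i j k m * N.layer σ x j m) + N.b i k)
  termination_by i => i
  decreasing_by exact j.isLt

/-- The (real-valued) output of the network with activation `σ`. -/
noncomputable def LayeredNet.eval {n : ℕ} (N : LayeredNet n) (σ : ℝ → ℝ)
    (x : EuclideanSpace ℝ (Fin n)) : ℝ :=
  (∑ m, N.cin m * x m) + (∑ i ∈ Finset.range N.depth, ∑ m, N.c i m * N.layer σ x i m) + N.c0

/-- The number of hidden units `|H| = ω₁ + ⋯ + ω_d`. -/
def LayeredNet.numHidden {n : ℕ} (N : LayeredNet n) : ℕ :=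
  ∑ i ∈ Finset.range N.depth, N.width i


lemma aux_quad {n : ℕ} (A : Matrix (Fin n) (Fin n) ℝ) (hA : A.IsHermitian) (c : ℝ)
    (hc : ∀ μ ∈ spectrum ℝ A, c ≤ μ) (v : Fin n → ℝ) :
    c * ∑ i, v i ^ 2 ≤ ∑ i, ∑ j, v i * A i j * v j := by
  have h1 : (A - algebraMap ℝ (Matrix (Fin n) (Fin n) ℝ) c).PosSemidef := by
    rw [Matrix.posSemidef_iff_isHermitian_and_spectrum_nonneg]
    refine ⟨?_, ?_⟩
    · apply hA.sub
      rw [Matrix.IsHermitian, Matrix.algebraMap_eq_diagonal]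
      simp
    · rw [← spectrum.sub_singleton_eq]
      rintro _ ⟨μ, hμ, _, rfl, rfl⟩
      simpa using hc μ hμ
  have h2 := h1.dotProduct_mulVec_nonneg v
  have h3 : star v ⬝ᵥ (A - algebraMap ℝ (Matrix (Fin n) (Fin n) ℝ) c).mulVec v
      = ∑ i, ∑ j, v i * A i j * v j - c * ∑ i, v i ^ 2 := by
    rw [Matrix.sub_mulVec, dotProduct_sub]
    congr 1
    · simp only [dotProduct, Matrix.mulVec, Finset.mul_sum, mul_assoc]
      rfl
    · rw [Algebra.algebraMap_eq_smul_one, Matrix.smul_mulVec, Matrix.one_mulVec]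
      simp only [dotProduct, Finset.mul_sum]
      refine Finset.sum_congr rfl fun i _ => ?_
      simp
      ring
  rw [h3] at h2
  linarith

lemma aux_abs {n : ℕ} (A : Matrix (Fin n) (Fin n) ℝ) (hA : A.IsHermitian) (m : ℝ)
    (hm : 0 < m)
    (h : m ≤ max 0 (Real.sign (lamMax A * lamMin A) * min |lamMax A| |lamMin A|))
    (v : Fin n → ℝ) :
    m * ∑ i, v i ^ 2 ≤ |∑ i, ∑ j, v i * A i j * v j| := by
  have hfin : (spectrum ℝ A).Finite := Matrix.finite_real_spectrum
  have hpos : 0 < lamMax A * lamMin A := by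
    by_contra hcon
    have : Real.sign (lamMax A * lamMin A) ≤ 0 := by
      rcases lt_or_eq_of_le (not_lt.mp hcon) with h' | h'
      · rw [Real.sign_of_neg h']; norm_num
      · rw [h']; simp
    have h0 : 0 ≤ min |lamMax A| |lamMin A| := by positivity
    have := mul_nonpos_of_nonpos_of_nonneg this h0
    rw [max_eq_left this] at h
    linarith
  rw [Real.sign_of_pos hpos, one_mul, max_eq_right (by positivity), le_min_iff] at h
  rcases pos_and_pos_or_neg_and_neg_of_mul_pos hpos with ⟨h1, h2⟩ | ⟨h1, h2⟩
  · rw [abs_of_pos h1, abs_of_pos h2] at h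
    refine le_trans ?_ (le_abs_self _)
    refine aux_quad A hA m (fun μ hμ => h.2.trans ?_) v
    exact csInf_le hfin.bddBelow hμ
  · rw [abs_of_neg h1, abs_of_neg h2] at h
    refine le_trans ?_ (neg_le_abs _)
    have := aux_quad (-A) hA.neg m (fun μ hμ => ?_) v
    · simpa [Finset.sum_neg_distrib] using this
    · rw [← spectrum.neg_eq] at hμ
      have : -μ ≤ lamMax A := le_csSup hfin.bddAbove (by simpa using hμ)
      linarith [h.1]

lemma aux_mid (h h' h'' : ℝ → ℝ) (M : ℝ)
    (h1 : ∀ s ∈ Set.Icc (0:ℝ) 1, HasDerivAt h (h' s) s)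
    (h2 : ∀ s ∈ Set.Icc (0:ℝ) 1, HasDerivAt h' (h'' s) s)
    (h3 : ∀ s ∈ Set.Icc (0:ℝ) 1, M ≤ h'' s) (a b : ℝ)
    (ha : a ∈ Set.Icc (0:ℝ) 1) (hb : b ∈ Set.Icc (0:ℝ) 1) :
    M * (b - a) ^ 2 ≤ 4 * (h a + h b - 2 * h ((a + b) / 2)) := by
  have hc : ConvexOn ℝ (Set.Icc (0:ℝ) 1) (fun s => h s - M / 2 * s ^ 2) := by
    refine convexOn_of_hasDerivWithinAt2_nonneg (convex_Icc 0 1)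
      (f' := fun s => h' s - M * s) (f'' := fun s => h'' s - M) ?_ ?_ ?_ ?_
    · intro s hs
      exact ((h1 s hs).continuousAt.sub (by fun_prop)).continuousWithinAt
    · intro s hs
      have := (h1 s (interior_subset hs)).sub (((hasDerivAt_id s).pow 2).const_mul (M / 2))
      refine (this.congr_deriv ?_).hasDerivWithinAt
      simp; ring
    · intro s hs
      have := (h2 s (interior_subset hs)).sub ((hasDerivAt_id s).const_mul M)
      refine (this.congr_deriv ?_).hasDerivWithinAt
      simp
    · intro s hs
      linarith [h3 s (interior_subset hs)]
  have := hc.2 ha hb (show (0:ℝ) ≤ 1/2 by norm_num) (show (0:ℝ) ≤ 1/2 by norm_num) (by norm_num)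
  simp only [smul_eq_mul] at this
  rw [show 1 / 2 * a + 1 / 2 * b = (a + b) / 2 by ring] at this
  nlinarith

lemma aux_1d (h h' h'' p : ℝ → ℝ) (M ε : ℝ) (hM : 0 < M)
    (h1 : ∀ s ∈ Set.Icc (0:ℝ) 1, HasDerivAt h (h' s) s)
    (h2 : ∀ s ∈ Set.Icc (0:ℝ) 1, HasDerivAt h' (h'' s) s)
    (hcont : ContinuousOn h'' (Set.Icc (0:ℝ) 1))
    (h3 : ∀ s ∈ Set.Icc (0:ℝ) 1, M ≤ |h'' s|) 
    (hp : ∀ s ∈ Set.Icc (0:ℝ) 1, |p s - h s| ≤ ε) (a b : ℝ)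
    (ha : a ∈ Set.Icc (0:ℝ) 1) (hb : b ∈ Set.Icc (0:ℝ) 1)
    (hmid : p ((a + b) / 2) = (p a + p b) / 2) :
    M * (b - a) ^ 2 ≤ 16 * ε := by
  have hm : (a + b) / 2 ∈ Set.Icc (0:ℝ) 1 := by
    constructor <;> linarith [ha.1, ha.2, hb.1, hb.2]
  have ea := abs_le.mp (hp a ha)
  have eb := abs_le.mp (hp b hb)
  have em := abs_le.mp (hp _ hm)
  have key : (∀ s ∈ Set.Icc (0:ℝ) 1, M ≤ h'' s) ∨ (∀ s ∈ Set.Icc (0:ℝ) 1, h'' s ≤ -M) := by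
    by_contra hcon
    push Not at hcon
    obtain ⟨⟨s, hs, hs'⟩, ⟨r, hr, hr'⟩⟩ := hcon
    have e1 : h'' s ≤ 0 := by
      rcases le_abs.mp (h3 s hs) with h | h <;> linarith
    have e2 : 0 ≤ h'' r := by
      rcases le_abs.mp (h3 r hr) with h | h <;> linarith
    obtain ⟨q, hq, hq0⟩ := isPreconnected_Icc.intermediate_value hs hr hcont ⟨e1, e2⟩
    have := h3 q hq
    rw [hq0, abs_zero] at this
    linarith
  rcases key with k | k
  · have := aux_mid h h' h'' M h1 h2 k a b ha hb
    linarith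
  · have := aux_mid (-h) (-h') (-h'') M (fun s hs => (h1 s hs).neg) (fun s hs => (h2 s hs).neg)
      (fun s hs => by have := k s hs; simp; linarith) a b ha hb
    simp at this
    linarith

/-- Preactivation. -/
noncomputable def auxPre {n : ℕ} (N : LayeredNet n) (σ : ℝ → ℝ)
    (x : EuclideanSpace ℝ (Fin n)) (i : ℕ) (k : Fin (N.width i)) : ℝ :=
  (∑ m, N.Win i k m * x m) +
      (∑ j : Fin i, ∑ m, N.W i j k m * N.layer σ x j m) + N.b i k

lemma aux_layer {n : ℕ} (N : LayeredNet n) (σ : ℝ → ℝ)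
    (x : EuclideanSpace ℝ (Fin n)) (i : ℕ) (k : Fin (N.width i)) :
    N.layer σ x i k = σ (auxPre N σ x i k) := by
  rw [LayeredNet.layer]; rfl

lemma aux_net {n : ℕ} (N : LayeredNet n) (σ : ℝ → ℝ) (t : ℕ) (I : Fin t → Set ℝ)
    (hconv : ∀ i, Convex ℝ (I i))
    (haff : ∀ i, ∃ a b : ℝ, ∀ z ∈ I i, σ z = a * z + b)
    (s : ((i : Fin N.depth) × Fin (N.width i)) → Fin t)
    (u v w : EuclideanSpace ℝ (Fin n)) (hwm : ∀ m, w m = (u m + v m) / 2)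
    (hu : ∀ i : Fin N.depth, ∀ k, auxPre N σ u i k ∈ I (s ⟨i, k⟩))
    (hv : ∀ i : Fin N.depth, ∀ k, auxPre N σ v i k ∈ I (s ⟨i, k⟩)) :
    N.eval σ w = (N.eval σ u + N.eval σ v) / 2 := by
  have key : ∀ i, i < N.depth → ∀ k, N.layer σ w i k = (N.layer σ u i k + N.layer σ v i k) / 2 := by
    intro i
    induction i using Nat.strong_induction_on with
    | _ i ih =>
      intro hi k
      have hpre : auxPre N σ w i k = (auxPre N σ u i k + auxPre N σ v i k) / 2 := by
        unfold auxPre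
        have e1 : ∑ m, N.Win i k m * w m
            = ((∑ m, N.Win i k m * u m) + ∑ m, N.Win i k m * v m) / 2 := by
          rw [← Finset.sum_add_distrib, Finset.sum_div]
          refine Finset.sum_congr rfl fun m _ => ?_
          rw [hwm]; ring
        have e2 : (∑ j : Fin i, ∑ m, N.W i j k m * N.layer σ w j m)
            = ((∑ j : Fin i, ∑ m, N.W i j k m * N.layer σ u j m)
              + ∑ j : Fin i, ∑ m, N.W i j k m * N.layer σ v j m) / 2 := by
          rw [← Finset.sum_add_distrib, Finset.sum_div]
          refine Finset.sum_congr rfl fun j _ => ?_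
          rw [← Finset.sum_add_distrib, Finset.sum_div]
          refine Finset.sum_congr rfl fun m _ => ?_
          rw [ih j j.isLt (j.isLt.trans hi)]; ring
        rw [e1, e2]; ring
      have mu := hu ⟨i, hi⟩ k
      have mv := hv ⟨i, hi⟩ k
      simp only at mu mv
      have mw : auxPre N σ w i k ∈ I (s ⟨⟨i, hi⟩, k⟩) := by
        have := hconv _ mu mv (a := 1/2) (b := 1/2) (by norm_num) (by norm_num) (by norm_num)
        rw [hpre]
        convert this using 1
        simp only [smul_eq_mul]; ring
      obtain ⟨a, b, hab⟩ := haff (s ⟨⟨i, hi⟩, k⟩)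
      rw [aux_layer, aux_layer, aux_layer, hab _ mu, hab _ mv, hab _ mw, hpre]
      ring
  unfold LayeredNet.eval
  have e1 : ∑ m, N.cin m * w m = ((∑ m, N.cin m * u m) + ∑ m, N.cin m * v m) / 2 := by
    rw [← Finset.sum_add_distrib, Finset.sum_div]
    refine Finset.sum_congr rfl fun m _ => ?_
    rw [hwm]; ring
  have e2 : (∑ i ∈ Finset.range N.depth, ∑ m, N.c i m * N.layer σ w i m)
      = ((∑ i ∈ Finset.range N.depth, ∑ m, N.c i m * N.layer σ u i m)
        + ∑ i ∈ Finset.range N.depth, ∑ m, N.c i m * N.layer σ v i m) / 2 := by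
    rw [← Finset.sum_add_distrib, Finset.sum_div]
    refine Finset.sum_congr rfl fun j hj => ?_
    rw [← Finset.sum_add_distrib, Finset.sum_div]
    refine Finset.sum_congr rfl fun m _ => ?_
    rw [key j (Finset.mem_range.mp hj)]; ring
  rw [e1, e2]; ring

lemma aux_cover {ι : Type*} [Fintype ι] (C : ι → Set ℝ) (δ : ℝ) (hδ : 0 ≤ δ)
    (hcov : Set.Icc (0:ℝ) 1 ⊆ ⋃ i, C i)
    (hC : ∀ i, ∀ a ∈ C i, ∀ b ∈ C i, |b - a| ≤ δ) : 1 ≤ (Fintype.card ι : ℝ) * δ := by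
  have h1 : MeasureTheory.volume (Set.Icc (0:ℝ) 1) ≤ ∑ i, MeasureTheory.volume (C i) :=
    (MeasureTheory.measure_mono hcov).trans (MeasureTheory.measure_iUnion_fintype_le _ _)
  have h2 : ∀ i, MeasureTheory.volume (C i) ≤ ENNReal.ofReal δ := fun i => by
    refine (Real.volume_le_diam _).trans (Metric.ediam_le fun a ha b hb => ?_)
    rw [edist_dist, Real.dist_eq]
    exact ENNReal.ofReal_le_ofReal (hC i b hb a ha)
  have h3 := h1.trans (Finset.sum_le_sum fun i _ => h2 i)
  simp only [Real.volume_Icc, Finset.sum_const, Finset.card_univ, nsmul_eq_mul] at h3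
  rw [← ENNReal.ofReal_natCast, ← ENNReal.ofReal_mul (by positivity)] at h3
  rw [ENNReal.ofReal_le_ofReal_iff (by positivity)] at h3
  linarith

lemma aux_hess {n : ℕ} (g : EuclideanSpace ℝ (Fin n) → ℝ) (z v : EuclideanSpace ℝ (Fin n)) :
    ∑ i, ∑ j, v i * hess g z i j * v j = fderiv ℝ (fderiv ℝ g) z v v := by
  have hv : v = ∑ i, v i • EuclideanSpace.single i (1:ℝ) := by
    ext k; simp [Finset.sum_apply, Pi.single_apply]
  conv_rhs => rw [hv]
  simp only [map_sum, map_smul, ContinuousLinearMap.sum_apply, ContinuousLinearMap.smul_apply,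
    hess, iteratedFDeriv_two_apply, smul_eq_mul, Finset.mul_sum]
  rw [Finset.sum_comm]
  refine Finset.sum_congr rfl fun i _ => Finset.sum_congr rfl fun j _ => ?_
  simp
  ring

lemma aux_herm {n : ℕ} (g : EuclideanSpace ℝ (Fin n) → ℝ) (z : EuclideanSpace ℝ (Fin n))
    (hg : ContDiffAt ℝ 2 g z) : (hess g z).IsHermitian := by
  have h := hg.isSymmSndFDerivAt (by simp)
  ext i j
  simp only [Matrix.conjTranspose_apply, hess, iteratedFDeriv_two_apply, star_trivial]
  exact h.eq _ _

/-- Corollary (weak form of Theorem 1): under the same hypotheses,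
`t^{|H|} ≥ sup_{(x,y) ∈ R×R} (‖x − y‖₂ / (4√ε)) · Ψ(g, x, y)`. -/
theorem network_approx_numHidden_bound {n : ℕ}
    (R : Set (EuclideanSpace ℝ (Fin n))) (hRc : IsCompact R) (hR : Convex ℝ R)
    (U : Set (EuclideanSpace ℝ (Fin n))) (hU : IsOpen U) (hRU : R ⊆ U)
    (g : EuclideanSpace ℝ (Fin n) → ℝ) (hg : ContDiffOn ℝ 2 g U)
    (ε : ℝ) (hε : 0 < ε)
    (N : LayeredNet n) (hd : 1 ≤ N.depth) (hw : ∀ i < N.depth, 1 ≤ N.width i)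
    (σ : ℝ → ℝ) (t : ℕ) (ht : 1 ≤ t) (hσ : PiecewiseLinear σ t)
    (hf : ∀ z ∈ R, |N.eval σ z - g z| ≤ ε) :
    (t : ℝ) ^ N.numHidden ≥
      sSup ((fun p : EuclideanSpace ℝ (Fin n) × EuclideanSpace ℝ (Fin n) =>
        (‖p.1 - p.2‖ / (4 * Real.sqrt ε)) * Psi g p.1 p.2) '' (R ×ˢ R)) := by
  apply Real.sSup_le _ (by positivity)
  rintro _ ⟨⟨x, y⟩, ⟨hx, hy⟩, rfl⟩
  simp only at hx hy ⊢
  obtain ⟨I, -, hconv, -, hcovI, haff⟩ := hσ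
  unfold Psi
  set F : ℝ → ℝ := fun α : ℝ =>
      max 0 (Real.sign (lamMax (hess g ((1 - α) • x + α • y)) *
          lamMin (hess g ((1 - α) • x + α • y))) *
        min |lamMax (hess g ((1 - α) • x + α • y))|
            |lamMin (hess g ((1 - α) • x + α • y))|) with hF
  set m := sInf (F '' Set.Icc (0:ℝ) 1) with hm
  have hmF : ∀ α ∈ Set.Icc (0:ℝ) 1, m ≤ F α := fun α hα =>
    csInf_le ⟨0, by rintro _ ⟨β, _, rfl⟩; exact le_max_left _ _⟩ ⟨α, hα, rfl⟩
  rcases le_or_gt m 0 with hm0 | hm0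
  · rw [Real.sqrt_eq_zero_of_nonpos hm0, mul_zero]; positivity
  rcases eq_or_ne x y with rfl | hxy
  · simp only [sub_self, norm_zero, zero_div, zero_mul]; positivity
  set L := ‖x - y‖ with hL
  have hLpos : 0 < L := norm_pos_iff.mpr (sub_ne_zero.mpr hxy)
  set d := y - x with hdd
  let ℓ : ℝ → EuclideanSpace ℝ (Fin n) := fun α => (1 - α) • x + α • y
  have hℓR : ∀ α ∈ Set.Icc (0:ℝ) 1, ℓ α ∈ R := fun α hα =>
    hR hx hy (by linarith [hα.2]) hα.1 (by ring)
  have hgz : ∀ α ∈ Set.Icc (0:ℝ) 1, ContDiffAt ℝ 2 g (ℓ α) := fun α hα =>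
    hg.contDiffAt (hU.mem_nhds (hRU (hℓR α hα)))
  have hℓd : ∀ α, HasDerivAt ℓ d α := fun α => by
    have h1 : HasDerivAt (fun α : ℝ => x + α • d) d α := by
      simpa using ((hasDerivAt_id α).smul_const d).const_add x
    have : ℓ = fun α : ℝ => x + α • d := by
      funext β
      simp only [ℓ, d]
      module
    rw [this]; exact h1
  have hg' : ∀ α ∈ Set.Icc (0:ℝ) 1, ContDiffAt ℝ 1 (fderiv ℝ g) (ℓ α) := fun α hα =>
    (hgz α hα).fderiv_right (by norm_num)
  have hg'' : ∀ α ∈ Set.Icc (0:ℝ) 1, ContDiffAt ℝ 0 (fderiv ℝ (fderiv ℝ g)) (ℓ α) :=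
    fun α hα => (hg' α hα).fderiv_right (by norm_num)
  have hnorm : ∑ i, d i ^ 2 = L ^ 2 := by
    rw [hL, norm_sub_rev, EuclideanSpace.real_norm_sq_eq]
  have key := aux_1d (fun α => g (ℓ α)) (fun α => fderiv ℝ g (ℓ α) d)
    (fun α => fderiv ℝ (fderiv ℝ g) (ℓ α) d d) (fun α => N.eval σ (ℓ α)) (m * L ^ 2) ε
    (by positivity)
    (fun s hs => ((hgz s hs).differentiableAt (by norm_num)).hasFDerivAt.comp_hasDerivAt s (hℓd s))
    (fun s hs => by
      have := ((hg' s hs).differentiableAt (by norm_num)).hasFDerivAt.comp_hasDerivAt s (hℓd s)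
      simpa using this.clm_apply (hasDerivAt_const s d))
    (fun s hs => by
      have h1 : ContinuousAt (fun α => fderiv ℝ (fderiv ℝ g) (ℓ α)) s :=
        ContinuousAt.comp (g := fderiv ℝ (fderiv ℝ g)) (f := ℓ)
          (hg'' s hs).continuousAt (hℓd s).continuousAt
      exact ((h1.clm_apply continuousAt_const).clm_apply continuousAt_const).continuousWithinAt)
    (fun s hs => by
      have := aux_abs (hess g (ℓ s)) (aux_herm g _ (hgz s hs)) m hm0 (hmF s hs) d
      rwa [aux_hess, hnorm] at this)
    (fun s hs => hf _ (hℓR s hs))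
  let C : (((i : Fin N.depth) × Fin (N.width i)) → Fin t) → Set ℝ := fun s =>
    {α | α ∈ Set.Icc (0:ℝ) 1 ∧ ∀ i : Fin N.depth, ∀ k, auxPre N σ (ℓ α) i k ∈ I (s ⟨i, k⟩)}
  have hsm : 0 < Real.sqrt m := Real.sqrt_pos.mpr hm0
  have hse : 0 < Real.sqrt ε := Real.sqrt_pos.mpr hε
  have hfin := aux_cover C (4 * Real.sqrt ε / (L * Real.sqrt m)) (by positivity)
    (by
      intro α hα
      have hz : ∀ z : ℝ, ∃ i, z ∈ I i := fun z => by
        have : z ∈ ⋃ i, I i := by rw [hcovI]; trivial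
        simpa using this
      choose idx hidx using hz
      rw [Set.mem_iUnion]
      exact ⟨fun p => idx (auxPre N σ (ℓ α) p.1 p.2), hα, fun i k => hidx _⟩)
    (by
      intro s a ha b hb
      have h1 := key a b ha.1 hb.1 (aux_net N σ t I hconv haff s (ℓ a) (ℓ b) _
        (fun q => by simp [ℓ]; ring) ha.2 hb.2)
      apply abs_le_of_sq_le_sq _ (by positivity)
      rw [div_pow, mul_pow, mul_pow, Real.sq_sqrt hε.le, Real.sq_sqrt hm0.le,
        le_div_iff₀ (by positivity)]
      linarith)
  have hcard : (Fintype.card (((i : Fin N.depth) × Fin (N.width i)) → Fin t) : ℝ)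
      = (t : ℝ) ^ N.numHidden := by
    rw [Fintype.card_fun, Fintype.card_sigma, Fintype.card_fin]
    simp only [Fintype.card_fin, LayeredNet.numHidden]
    rw [Fin.sum_univ_eq_sum_range (fun i => N.width i)]
    push_cast; rfl
  rw [hcard] at hfin
  rw [mul_div_assoc', le_div_iff₀ (by positivity)] at hfin
  rw [div_mul_eq_mul_div, div_le_iff₀ (by positivity)]
  linarith
end
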